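/- arXiv:2407.21420 — 2 statements merged into one kernel-verified Lean document; each statement's English description precedes it below -/
import Mathlib

section
/- Let x^(1), …, x^(n) be rational points of X(2,2)₊ such that the pairs (x₁^(i), x₂^(i)) are pairwise distinct, and let y^(1), …, y^(n) be rational numbers. Then there exist complex numbers a_2, a_3, …, a_{n+1}, each having rational real and imaginary parts, such that the function f_n(x) = ∑_{ℓ=2}^{n+1} a_ℓ (x₁ + i x₂)^{−ℓ} satisfies f_n(x^(i)) = y^(i) for every 1 ≤ i ≤ n. -/
/-- The Gaussian rationals, as a subfield of `ℂ`. -/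
def gaussianRationals : Subfield ℂ where
  carrier := {z | ∃ p q : ℚ, z = (p : ℂ) + (q : ℂ) * Complex.I}
  one_mem' := ⟨1, 0, by simp⟩
  zero_mem' := ⟨0, 0, by simp⟩
  add_mem' := by
    rintro _ _ ⟨p, q, rfl⟩ ⟨r, s, rfl⟩
    exact ⟨p + r, q + s, by push_cast; ring⟩
  neg_mem' := by
    rintro _ ⟨p, q, rfl⟩
    exact ⟨-p, -q, by push_cast; ring⟩
  mul_mem' := by
    rintro _ _ ⟨p, q, rfl⟩ ⟨r, s, rfl⟩
    refine ⟨p * r - q * s, p * s + q * r, ?_⟩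
    push_cast
    linear_combination (q : ℂ) * s * Complex.I_sq
  inv_mem' := by
    rintro _ ⟨p, q, rfl⟩
    refine ⟨p / (p ^ 2 + q ^ 2), -q / (p ^ 2 + q ^ 2), ?_⟩
    apply Complex.ext <;>
      simp only [Complex.inv_re, Complex.inv_im, Complex.normSq_apply, Complex.add_re,
        Complex.add_im, Complex.mul_re, Complex.mul_im, Complex.I_re, Complex.I_im,
        Complex.ratCast_re, Complex.ratCast_im] <;>
      push_cast <;> ring

theorem mem_gaussianRationals {z : ℂ} :
    z ∈ gaussianRationals ↔ ∃ p q : ℚ, z = (p : ℂ) + (q : ℂ) * Complex.I :=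
  Iff.rfl

/-- Polynomial interpolation at `n` distinct nodes, in terms of coefficients. -/
theorem exists_sum_mul_pow_eq {K : Type*} [Field K] {n : ℕ} {w : Fin n → K}
    (hw : Function.Injective w) (v : Fin n → K) :
    ∃ a : Fin n → K, ∀ i, ∑ m : Fin n, a m * w i ^ (m : ℕ) = v i := by
  have hdet : IsUnit (Matrix.vandermonde w) :=
    (Matrix.isUnit_iff_isUnit_det _).2 (Matrix.det_vandermonde_ne_zero_iff.2 hw).isUnit
  obtain ⟨a, ha⟩ := Matrix.mulVec_surjective_iff_isUnit.2 hdet v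
  refine ⟨a, fun i => ?_⟩
  rw [← ha]
  simp [Matrix.mulVec, dotProduct, Matrix.vandermonde_apply, mul_comm]

/-- Rational Whitney interpolation on `X(2,2)₊`: for rational points of `X(2,2)₊`
with pairwise distinct first two coordinate pairs and rational values `y i`,
there are Gaussian-rational coefficients `a_2, …, a_{n+1}` such that
`f_n(x) = ∑_{ℓ=2}^{n+1} a_ℓ (x₁ + i x₂)^(-ℓ)` interpolates the data exactly. -/
theorem stmt_13 (n : ℕ) (x : Fin n → Fin 4 → ℝ)
    (hX : ∀ i, (x i 0) ^ 2 + (x i 1) ^ 2 - (x i 2) ^ 2 - (x i 3) ^ 2 = 1)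
    (hrat : ∀ i j, ∃ q : ℚ, x i j = (q : ℝ))
    (hdist : ∀ i j, i ≠ j → (x i 0, x i 1) ≠ (x j 0, x j 1))
    (y : Fin n → ℚ) :
    ∃ a : Fin n → ℂ,
      (∀ m, ∃ qr qi : ℚ, a m = (qr : ℂ) + (qi : ℂ) * Complex.I) ∧
      ∀ i, ∑ m : Fin n,
        a m * (((x i 0 : ℝ) : ℂ) + Complex.I * ((x i 1 : ℝ) : ℂ)) ^ (-(m.val : ℤ) - 2)
          = (y i : ℂ) := by
  set z : Fin n → ℂ := fun i => ((x i 0 : ℝ) : ℂ) + Complex.I * ((x i 1 : ℝ) : ℂ) with hz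
  have hre : ∀ i, (z i).re = x i 0 := fun i => by simp [hz]
  have him : ∀ i, (z i).im = x i 1 := fun i => by simp [hz]
  have hz0 : ∀ i, z i ≠ 0 := by
    intro i h
    have h0 : x i 0 = 0 := by rw [← hre, h, Complex.zero_re]
    have h1 : x i 1 = 0 := by rw [← him, h, Complex.zero_im]
    have := hX i
    rw [h0, h1] at this
    nlinarith [sq_nonneg (x i 2), sq_nonneg (x i 3)]
  have hzinj : Function.Injective z := by
    intro i j h
    by_contra hij
    exact hdist i j hij (by rw [← hre, ← him, h, hre, him])
  have hmem : ∀ i, z i ∈ gaussianRationals := by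
    intro i
    obtain ⟨p, hp⟩ := hrat i 0
    obtain ⟨q, hq⟩ := hrat i 1
    exact ⟨p, q, by simp [hz, hp, hq, mul_comm]⟩
  let u : Fin n → gaussianRationals := fun i => ⟨z i, hmem i⟩
  have hu : Function.Injective fun i => (u i)⁻¹ := fun i j h =>
    hzinj (congrArg Subtype.val (inv_injective h))
  obtain ⟨a, ha⟩ := exists_sum_mul_pow_eq hu fun i => (y i : gaussianRationals) * u i ^ 2
  refine ⟨fun m => a m, fun m => mem_gaussianRationals.1 (a m).2, fun i => ?_⟩
  have hi : ∑ m : Fin n, (a m : ℂ) * (z i)⁻¹ ^ (m : ℕ) = (y i : ℂ) * z i ^ 2 := by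
    simpa [u] using congrArg (gaussianRationals.subtype) (ha i)
  rw [← mul_div_cancel_right₀ (y i : ℂ) (pow_ne_zero 2 (hz0 i)), ← hi, Finset.sum_div]
  refine Finset.sum_congr rfl fun m _ => ?_
  change (a m : ℂ) * z i ^ (-(m.val : ℤ) - 2) = _
  rw [zpow_sub₀ (hz0 i), zpow_neg, zpow_natCast, inv_pow, mul_div_assoc]
  norm_cast
end

section
/- Let x^(1), …, x^(n) be pairwise distinct points of X(2,2)₊ and let y_1, …, y_n be complex numbers. Then there exist an infinitely differentiable function t : ℝ⁴ → ℝ and complex numbers a_2, a_3, …, a_{n+1} such that the function F(x) = ∑_{ℓ=2}^{n+1} a_ℓ ( e^{i t(x)} (x₁ + i x₂) )^{−ℓ} satisfies F(x^(i)) = y_i exactly, for every 1 ≤ i ≤ n. -/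
/-- Finitely many prescribed real values at distinct points of `ι → ℝ` are attained by a
smooth function. -/
theorem exists_contDiff_apply_eq {ι κ : Type*} [Fintype ι] [Fintype κ] {x : κ → ι → ℝ}
    (hx : Function.Injective x) (θ : κ → ℝ) :
    ∃ t : (ι → ℝ) → ℝ, ContDiff ℝ (⊤ : ℕ∞) t ∧ ∀ i, t (x i) = θ i := by
  classical
  let q : (ι → ℝ) → (ι → ℝ) → ℝ := fun p r => ∑ k, (p k - r k) ^ 2
  have hq : ∀ {p r}, q p r = 0 → p = r := fun {p r} h => by
    funext k
    have := (Finset.sum_eq_zero_iff_of_nonneg fun k _ => sq_nonneg (p k - r k)).1 h k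
      (Finset.mem_univ k)
    exact sub_eq_zero.1 (pow_eq_zero_iff two_ne_zero |>.1 this)
  refine ⟨fun p => ∑ i, θ i * ∏ j ∈ Finset.univ.erase i, q p (x j) / q (x i) (x j), ?_, ?_⟩
  · refine ContDiff.sum fun i _ => contDiff_const.mul (contDiff_prod fun j _ => ?_)
    exact (ContDiff.sum fun k _ => ((contDiff_apply ℝ ℝ k).sub contDiff_const).pow 2).div_const _
  · intro i
    dsimp only
    rw [Finset.sum_eq_single i]
    · rw [Finset.prod_eq_one, mul_one]
      intro j hj
      exact div_self fun h => Finset.ne_of_mem_erase hj (hx (hq h)).symm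
    · intro b _ hb
      rw [Finset.prod_eq_zero (i := i) (by simp [hb.symm]) (by simp [q]), mul_zero]
    · simp

/-- Nonzero distinct nodes admit exact interpolation by combinations of the powers
`w ^ (-2), …, w ^ (-(n + 1))`. -/
theorem exists_sum_mul_zpow_eq {K : Type*} [Field K] {n : ℕ} {w : Fin n → K}
    (hw : Function.Injective w) (hw0 : ∀ i, w i ≠ 0) (y : Fin n → K) :
    ∃ a : Fin n → K, ∀ i, ∑ m : Fin n, a m * w i ^ (-(m.val : ℤ) - 2) = y i := by
  have hdet : (Matrix.vandermonde fun i => (w i)⁻¹).det ≠ 0 :=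
    Matrix.det_vandermonde_ne_zero_iff.2 (inv_injective.comp hw)
  obtain ⟨a, ha⟩ := Matrix.mulVec_surjective_iff_isUnit.2
    ((Matrix.isUnit_iff_isUnit_det _).2 hdet.isUnit) fun i => y i * w i ^ 2
  refine ⟨a, fun i => ?_⟩
  have h := congrFun ha i
  simp only [Matrix.mulVec, dotProduct, Matrix.vandermonde_apply] at h
  rw [← mul_left_inj' (pow_ne_zero 2 (hw0 i)), ← h, Finset.sum_mul]
  refine Finset.sum_congr rfl fun m _ => ?_
  rw [zpow_sub₀ (hw0 i), zpow_neg, zpow_natCast, inv_pow]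
  have := hw0 i
  norm_cast
  field_simp

/-- Nonzero complex numbers become pairwise distinct after suitable rotations. -/
theorem exists_injective_exp_mul {n : ℕ} {z : Fin n → ℂ} (hz : ∀ i, z i ≠ 0) :
    ∃ θ : Fin n → ℝ, Function.Injective fun i => Complex.exp (Complex.I * (θ i : ℂ)) * z i := by
  refine ⟨fun i => (i : ℝ) / n - (z i).arg, ?_⟩
  have harg : ∀ i : Fin n, (Complex.exp (Complex.I * (((i : ℝ) / n - (z i).arg : ℝ) : ℂ)) *
      z i).arg = (i : ℝ) / n := by
    intro i
    have hn : (0 : ℝ) < n := by exact_mod_cast i.pos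
    have h1 : (i : ℝ) / n < 1 := (div_lt_one hn).2 (by exact_mod_cast i.2)
    have h0 : 0 ≤ (i : ℝ) / n := by positivity
    have hpi := Real.pi_gt_three
    have h : Complex.exp (Complex.I * (((i : ℝ) / n - (z i).arg : ℝ) : ℂ)) * z i =
        (‖z i‖ : ℂ) * Complex.exp ((((i : ℝ) / n : ℝ) : ℂ) * Complex.I) := by
      conv_lhs => rw [← Complex.norm_mul_exp_arg_mul_I (z i)]
      rw [mul_left_comm, Complex.arg_real_mul _ (norm_pos_iff.2 (hz i)),
        Complex.arg_exp_mul_I, (toIocMod_eq_self _).2 ⟨(z i).neg_pi_lt_arg, by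
          have := (z i).arg_le_pi
          linarith⟩, ← Complex.exp_add]
      congr 2
      push_cast
      ring
    rw [h, Complex.arg_real_mul _ (norm_pos_iff.2 (hz i)), Complex.arg_exp_mul_I]
    exact (toIocMod_eq_self _).2 ⟨by linarith, by linarith⟩
  intro i j hij
  have h := congrArg Complex.arg hij
  simp only [harg] at h
  have hn : (n : ℝ) ≠ 0 := by exact_mod_cast i.pos.ne'
  rw [div_left_inj' hn] at h
  exact Fin.ext (by exact_mod_cast h)

/-- Exact Whitney extension on `X(2,2)₊` via a smooth phase: for pairwise distinct
points `x⁽¹⁾, …, x⁽ⁿ⁾` of `X(2,2)₊` and complex values `y i`, there exist an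
infinitely differentiable function `t : ℝ⁴ → ℝ` and coefficients
`a_2, …, a_{n+1}` such that `F(x) = ∑_{ℓ=2}^{n+1} a_ℓ (e^{i t(x)} (x₁ + i x₂))^(-ℓ)`
satisfies `F(x⁽ⁱ⁾) = y i` exactly for all `i`. -/
theorem stmt_17 (n : ℕ) (x : Fin n → Fin 4 → ℝ)
    (hX : ∀ i, (x i 0) ^ 2 + (x i 1) ^ 2 - (x i 2) ^ 2 - (x i 3) ^ 2 = 1)
    (hdist : Function.Injective x) (y : Fin n → ℂ) :
    ∃ (t : (Fin 4 → ℝ) → ℝ) (a : Fin n → ℂ),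
      ContDiff ℝ (⊤ : ℕ∞) t ∧
      ∀ i, ∑ m : Fin n,
        a m * (Complex.exp (Complex.I * (t (x i) : ℂ)) *
          (((x i 0 : ℝ) : ℂ) + Complex.I * ((x i 1 : ℝ) : ℂ))) ^ (-(m.val : ℤ) - 2)
        = y i := by
  have hz : ∀ i, ((x i 0 : ℝ) : ℂ) + Complex.I * ((x i 1 : ℝ) : ℂ) ≠ 0 := by
    intro i h
    have hre := congrArg Complex.re h
    have him := congrArg Complex.im h
    simp at hre him
    have hi := hX i
    rw [hre, him] at hi
    nlinarith [sq_nonneg (x i 2), sq_nonneg (x i 3)]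
  obtain ⟨θ, hθ⟩ := exists_injective_exp_mul hz
  obtain ⟨t, ht, htθ⟩ := exists_contDiff_apply_eq hdist θ
  obtain ⟨a, ha⟩ := exists_sum_mul_zpow_eq hθ
    (fun i => mul_ne_zero (Complex.exp_ne_zero _) (hz i)) y
  exact ⟨t, a, ht, fun i => by rw [htθ]; exact ha i⟩
end
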